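/- Let (E, ℰ) be a standard Borel (Lusin) space and let ν be a Markov kernel on E. Then there exist a measurable space (F, 𝓕), a probability measure μ on (F, 𝓕), and a measurable map X : E × F → E such that for every x ∈ E the pushforward of μ under y ↦ X(x, y) equals ν(x, ·); equivalently, the dynamical system T̃(x, y) = (X(x, y), y) on E × F dilates ν, in the sense that for every bounded measurable f : E → ℝ and every x ∈ E, ∫_F f(X(x, y)) dμ(y) = ∫_E f(z) ν(x, dz). -/

import Mathlib

open MeasureTheory ProbabilityTheory

/-!
Embed the target space measurably in `[0, 1]`, so that each `ν x` has a distribution function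
`G x`. Its generalized inverse `X (x, y) = sup {t | G x t < y}` pushes the uniform law of `y`
forward to `ν x`. It is jointly measurable because `{(x, y) | a < X (x, y)}` is the union over
rational `q > a` of the sets `{(x, y) | G x q < y}`. Pulling back along the embedding returns to
the original space.
-/

section Dilation

variable {α F Ω : Type*} [MeasurableSpace α] [MeasurableSpace F] [MeasurableSpace Ω]

/-- Dilation of a kernel `ν` by the dynamical system `(x, y) ↦ (X (x, y), y)`, where `y` has law
`μ`: averaging out the hidden coordinate `y` recovers `ν`. Only the first component `X` of the
system is recorded, which allows the source `α` and the target `Ω` of `ν` to differ. -/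
structure Dilates (X : α × F → Ω) (μ : Measure F) (ν : Kernel α Ω) : Prop where
  measurable : Measurable X
  map_eq (x : α) : μ.map (fun y ↦ X (x, y)) = ν x

theorem Dilates.measurePreserving {X : α × F → Ω} {μ : Measure F} {ν : Kernel α Ω}
    (h : Dilates X μ ν) (x : α) : MeasurePreserving (fun y ↦ X (x, y)) μ (ν x) :=
  ⟨h.measurable.comp measurable_prodMk_left, h.map_eq x⟩

theorem Dilates.integral_comp {G : Type*} [NormedAddCommGroup G] [NormedSpace ℝ G]
    {X : α × F → Ω} {μ : Measure F} {ν : Kernel α Ω} (h : Dilates X μ ν) {x : α} {f : Ω → G}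
    (hf : AEStronglyMeasurable f (ν x)) : ∫ y, f (X (x, y)) ∂μ = ∫ z, f z ∂(ν x) :=
  (h.measurePreserving x).hasLaw.integral_comp hf

theorem nonempty_of_isMarkovKernel [Nonempty α] (ν : Kernel α Ω) [IsMarkovKernel ν] :
    Nonempty Ω :=
  nonempty_of_isProbabilityMeasure (ν (Classical.arbitrary α))

theorem markov_kernel_dilation_exists_general [StandardBorelSpace Ω] (ν : Kernel α Ω)
    [IsMarkovKernel ν] : ∃ X : α × unitInterval → Ω, Dilates X volume ν := by
  rcases isEmpty_or_nonempty α with _ | _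
  · exact ⟨isEmptyElim, measurable_of_empty _, isEmptyElim⟩
  · have : Nonempty Ω := nonempty_of_isMarkovKernel ν
    obtain ⟨g, hg, hmap⟩ := ν.exists_measurable_map_eq_unitInterval
    exact ⟨Function.uncurry g, hg, hmap⟩

end Dilation

/-- Every Markov kernel `ν` on a standard Borel (Lusin) space `E` can be dilated
into a dynamical system: there are a measurable space `F`, a probability measure
`μ` on `F` and a measurable map `X : E × F → E` such that `ν(x, ·)` is the
pushforward of `μ` under `X(x, ·)` for every `x`; equivalently, the dynamical
system `T'(x,y) = (X(x,y), y)` on `E × F` dilates `ν`, in the sense that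
`∫_F f(X(x,y)) dμ(y) = ∫_E f(z) ν(x, dz)` for every bounded measurable `f`. -/
theorem markov_kernel_dilation_exists
    {E : Type} [MeasurableSpace E] [StandardBorelSpace E]
    (ν : Kernel E E) [IsMarkovKernel ν] :
    ∃ (F : Type) (_ : MeasurableSpace F) (μ : Measure F),
      IsProbabilityMeasure μ ∧
      ∃ X : E × F → E, Measurable X ∧
        (∀ x : E, Measure.map (fun y => X (x, y)) μ = ν x) ∧
        (∀ f : E → ℝ, Measurable f → (∃ C, ∀ z, |f z| ≤ C) →
          ∀ x : E, ∫ y, f (X (x, y)) ∂μ = ∫ z, f z ∂(ν x)) := by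
  obtain ⟨X, hX⟩ := markov_kernel_dilation_exists_general ν
  exact ⟨unitInterval, inferInstance, volume, inferInstance, X, hX.measurable, hX.map_eq,
    fun f hf _ x ↦ hX.integral_comp hf.aestronglyMeasurable⟩
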